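/- The image of the function g : (0, ∞) → ℝ contains the open interval (0, 4); that is, for every real number r with 0 < r < 4 there exists s > 0 such that g(s) = r. -/

import Mathlib

/-!
The function `g` is continuous on `(0, ∞)`, tends to `0` at `0⁺` (`tendsto_g_zero`) and to `4` at
`∞` (`tendsto_g_atTop`), so the intermediate value theorem gives every value in `(0, 4)`.

The relation `t + 1/t = T` controls everything.  It gives `s + 1 ≤ t ≤ s + 2 + 2/s`, and the
quantity `q = 1 - (2 + s) t + t²` equals `t (T - 2 - s) = t (2 + √(s² + 4) - s) / (2 s)`, so that
`q ≥ t / s > 1`.  In terms of `q` the polynomials in the numerator of `B` become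
`(1 + s) q - 1 + s t` and `s q - t`, which shows `B > 0`.

As `s → 0⁺`, `s t → 2` and `t → ∞`, hence `B → 1` and `g → 0`.  As `s → ∞`, `s / t → 1` and
`q → 1`, hence `B t² → 1`, and `g = 4 - log (B t²) / log √t → 4`.
-/

open Real Filter Topology

noncomputable def T (s : ℝ) : ℝ := (2 + 3*s + 2*s^2 + Real.sqrt (s^2 + 4)) / (2*s)

noncomputable def t (s : ℝ) : ℝ := (T s + Real.sqrt ((T s)^2 - 4)) / 2

noncomputable def B (s : ℝ) : ℝ :=
  (s * (1 - (2 + s) * t s + (t s)^2) * (s - (2 + 2*s + s^2) * t s + (1 + s) * (t s)^2)^2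
    + (1 + s - t s)^2 * (t s)^3 * (s - (1 + s)^2 * t s + s * (t s)^2)^2)
  / ((t s - 1)^2 * (t s)^5)

noncomputable def g (s : ℝ) : ℝ := - Real.log (B s) / Real.log (Real.sqrt (t s))

lemma add_two_le_T {s : ℝ} (hs : 0 < s) : s + 2 ≤ T s := by
  have h : s ≤ √(s^2 + 4) := Real.le_sqrt_of_sq_le (by linarith)
  rw [T, le_div_iff₀ (by positivity)]
  nlinarith

lemma T_le {s : ℝ} (hs : 0 < s) : T s ≤ s + 2 + 2 / s := by
  have h : √(s^2 + 4) ≤ s + 2 := Real.sqrt_le_iff.2 ⟨by linarith, by nlinarith⟩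
  rw [T, div_le_iff₀ (by positivity)]
  have : (s + 2 + 2 / s) * (2 * s) = 2 * s^2 + 4 * s + 4 := by
    field_simp
    ring
  rw [this]
  linarith

lemma t_sq_add_one {s : ℝ} (hs : 0 < s) : (t s)^2 + 1 = t s * T s := by
  have h := add_two_le_T hs
  have h2 : √((T s)^2 - 4) ^ 2 = (T s)^2 - 4 := Real.sq_sqrt (by nlinarith)
  unfold t
  nlinarith

lemma one_le_t {s : ℝ} (hs : 0 < s) : 1 ≤ t s := by
  have h := add_two_le_T hs
  have h2 := Real.sqrt_nonneg ((T s)^2 - 4)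
  unfold t
  linarith

lemma t_eq {s : ℝ} (hs : 0 < s) : t s = T s - (t s)⁻¹ := by
  have h1 := one_le_t hs
  have h2 := t_sq_add_one hs
  have : t s ≠ 0 := by positivity
  field_simp
  linarith

lemma add_one_le_t {s : ℝ} (hs : 0 < s) : s + 1 ≤ t s := by
  have h1 : (t s)⁻¹ ≤ 1 := inv_le_one_of_one_le₀ (one_le_t hs)
  have h2 := t_eq hs
  have h3 := add_two_le_T hs
  linarith

lemma t_le {s : ℝ} (hs : 0 < s) : t s ≤ s + 2 + 2 / s := by
  have h1 : 0 < (t s)⁻¹ := inv_pos.2 (by linarith [one_le_t hs])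
  have h2 := t_eq hs
  have h3 := T_le hs
  linarith

/-- The first factor of the numerator of `B`, apart from `s`. -/
noncomputable def q (s : ℝ) : ℝ := 1 - (2 + s) * t s + (t s)^2

lemma q_eq {s : ℝ} (hs : 0 < s) : q s = t s / s * (1 + (√(s^2 + 4) - s) / 2) := by
  have h : q s = t s * (T s - 2 - s) := by
    have := t_sq_add_one hs
    unfold q
    linarith
  rw [h, T]
  field_simp
  ring

lemma one_lt_q {s : ℝ} (hs : 0 < s) : 1 < q s := by
  have h : s ≤ √(s^2 + 4) := Real.le_sqrt_of_sq_le (by linarith)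
  have h1 : 1 < t s / s := by
    rw [lt_div_iff₀ hs]
    linarith [add_one_le_t hs]
  rw [q_eq hs]
  nlinarith

lemma B_eq_q (s : ℝ) : B s = (s * q s * ((1 + s) * q s - 1 + s * t s)^2
    + (1 + s - t s)^2 * (t s)^3 * (s * q s - t s)^2) / ((t s - 1)^2 * (t s)^5) := by
  unfold B q
  ring

lemma B_pos {s : ℝ} (hs : 0 < s) : 0 < B s := by
  have h1 := add_one_le_t hs
  have h2 := one_lt_q hs
  have h3 : 0 < t s := by linarith
  have h4 : 0 < t s - 1 := by linarith
  have h5 : 0 < (1 + s) * q s - 1 + s * t s := by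
    have : 0 < s * t s := by positivity
    nlinarith
  have h6 : 0 < q s := by linarith
  rw [B_eq_q]
  positivity

lemma continuousOn_T : ContinuousOn T (Set.Ioi 0) := by
  unfold T
  refine ContinuousOn.div (by fun_prop) (by fun_prop) fun s hs => ?_
  have : (0 : ℝ) < s := hs
  positivity

lemma continuousOn_t : ContinuousOn t (Set.Ioi 0) := by
  have := continuousOn_T
  unfold t
  fun_prop

lemma continuousOn_B : ContinuousOn B (Set.Ioi 0) := by
  have := continuousOn_t
  unfold B
  refine ContinuousOn.div (by fun_prop) (by fun_prop) fun s hs => ?_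
  have hs : (0 : ℝ) < s := hs
  have h1 := add_one_le_t hs
  have h3 : 0 < t s := by linarith
  have h4 : 0 < t s - 1 := by linarith
  positivity

lemma log_sqrt_t_pos {s : ℝ} (hs : 0 < s) : 0 < log √(t s) := by
  apply Real.log_pos
  rw [Real.lt_sqrt zero_le_one]
  linarith [add_one_le_t hs]

lemma continuousOn_g : ContinuousOn g (Set.Ioi 0) := by
  unfold g
  refine ContinuousOn.div (continuousOn_B.log fun s hs => (B_pos hs).ne').neg
    (continuousOn_t.sqrt.log fun s hs => ?_) fun s hs => (log_sqrt_t_pos hs).ne'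
  have := add_one_le_t (Set.mem_Ioi.1 hs)
  have : 0 < t s := by linarith [Set.mem_Ioi.1 hs]
  positivity

lemma tendsto_log_sqrt_t {l : Filter ℝ} (h : Tendsto t l atTop) :
    Tendsto (fun s => log √(t s)) l atTop :=
  Real.tendsto_log_atTop.comp (Real.tendsto_sqrt_atTop.comp h)

lemma tendsto_mul_t_zero : Tendsto (fun s => s * t s) (𝓝[>] 0) (𝓝 2) := by
  have h0 : Tendsto (fun s : ℝ => s) (𝓝[>] 0) (𝓝 0) := nhdsWithin_le_nhds
  have h1 : Tendsto (fun s : ℝ => (2 + 3*s + 2*s^2 + √(s^2 + 4)) / 2) (𝓝[>] 0) (𝓝 2) := by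
    have hc : Continuous (fun s : ℝ => (2 + 3*s + 2*s^2 + √(s^2 + 4)) / 2) := by fun_prop
    have h4 : √(4 : ℝ) = 2 := by
      rw [show (4 : ℝ) = 2^2 by norm_num]
      exact Real.sqrt_sq (by norm_num)
    have := (hc.tendsto 0).mono_left (nhdsWithin_le_nhds (s := Set.Ioi 0))
    convert this using 2
    norm_num [h4]
  have h2 : Tendsto (fun s : ℝ => s * (t s)⁻¹) (𝓝[>] 0) (𝓝 0) := by
    refine tendsto_of_tendsto_of_tendsto_of_le_of_le' tendsto_const_nhds h0 ?_ ?_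
    · filter_upwards [self_mem_nhdsWithin] with s hs
      have hs : (0 : ℝ) < s := hs
      have := one_le_t hs
      positivity
    · filter_upwards [self_mem_nhdsWithin] with s hs
      exact mul_le_of_le_one_right (le_of_lt hs) (inv_le_one_of_one_le₀ (one_le_t hs))
  have h3 := h1.sub h2
  rw [sub_zero] at h3
  refine h3.congr' ?_
  filter_upwards [self_mem_nhdsWithin] with s hs
  have hs : (0 : ℝ) < s := hs
  have h5 : s * t s = s * T s - s * (t s)⁻¹ := by
    rw [← mul_sub, ← t_eq hs]
  rw [h5, T]
  field_simp

lemma tendsto_t_zero : Tendsto t (𝓝[>] 0) atTop := by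
  have h := tendsto_mul_t_zero.pos_mul_atTop two_pos tendsto_inv_nhdsGT_zero
  refine h.congr' ?_
  filter_upwards [self_mem_nhdsWithin] with s hs
  have : s ≠ 0 := (Set.mem_Ioi.1 hs).ne'
  field_simp

lemma tendsto_B_zero : Tendsto B (𝓝[>] 0) (𝓝 1) := by
  have h0 : Tendsto (fun s : ℝ => s) (𝓝[>] 0) (𝓝 0) := nhdsWithin_le_nhds
  -- `B` is a rational function of `(s, t⁻¹, s t)`, which tends to `(0, 0, 2)`.
  let F : ℝ × ℝ × ℝ → ℝ := fun x =>
    (x.1 * x.2.1 * (x.2.1^2 - (2 + x.1) * x.2.1 + 1)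
        * (x.1 * x.2.1^2 - (2 + 2*x.1 + x.1^2) * x.2.1 + (1 + x.1))^2
      + ((1 + x.1) * x.2.1 - 1)^2 * (x.1 * x.2.1 - (1 + x.1)^2 + x.2.2)^2) / (1 - x.2.1)^2
  have hF : ContinuousAt F (0, 0, 2) :=
    ContinuousAt.div (by fun_prop) (by fun_prop) (by norm_num)
  have h := hF.tendsto.comp (h0.prodMk_nhds
    ((tendsto_inv_atTop_zero.comp tendsto_t_zero).prodMk_nhds tendsto_mul_t_zero))
  have hF0 : F (0, 0, 2) = 1 := by norm_num [F]
  rw [hF0] at h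
  refine h.congr' ?_
  filter_upwards [self_mem_nhdsWithin] with s hs
  have hs : (0 : ℝ) < s := hs
  have h1 := add_one_le_t hs
  have h3 : t s ≠ 0 := by linarith
  have h4 : t s - 1 ≠ 0 := by linarith
  have h5 : 1 - (t s)⁻¹ = (t s - 1) / t s := by field_simp
  simp only [F, Function.comp, B]
  rw [h5]
  field_simp

lemma tendsto_g_zero : Tendsto g (𝓝[>] 0) (𝓝 0) := by
  have h := (tendsto_B_zero.log one_ne_zero).neg
  exact h.div_atTop (tendsto_log_sqrt_t tendsto_t_zero)

lemma tendsto_t_atTop : Tendsto t atTop atTop := by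
  refine tendsto_atTop_mono' _ ?_ tendsto_id
  filter_upwards [eventually_gt_atTop 0] with s hs
  have := add_one_le_t hs
  simp only [id]
  linarith

lemma tendsto_t_div_atTop : Tendsto (fun s => t s / s) atTop (𝓝 1) := by
  have hi : Tendsto (fun s : ℝ => s⁻¹) atTop (𝓝 0) := tendsto_inv_atTop_zero
  have h1 : Tendsto (fun s : ℝ => 1 + 2 * s⁻¹ + 2 * s⁻¹^2) atTop (𝓝 1) := by
    have := ((hi.const_mul 2).const_add 1).add ((hi.pow 2).const_mul 2)
    simpa using this
  refine tendsto_of_tendsto_of_tendsto_of_le_of_le' tendsto_const_nhds h1 ?_ ?_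
  · filter_upwards [eventually_gt_atTop 0] with s hs
    rw [le_div_iff₀ hs]
    linarith [add_one_le_t hs]
  · filter_upwards [eventually_gt_atTop 0] with s hs
    rw [div_le_iff₀ hs]
    have : (1 + 2 * s⁻¹ + 2 * s⁻¹^2) * s = s + 2 + 2 / s := by field_simp
    rw [this]
    exact t_le hs

lemma tendsto_q_atTop : Tendsto q atTop (𝓝 1) := by
  have he : Tendsto (fun s : ℝ => √(s^2 + 4) - s) atTop (𝓝 0) := by
    have h2 : Tendsto (fun s : ℝ => 2 / s) atTop (𝓝 0) := tendsto_const_nhds.div_atTop tendsto_id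
    refine tendsto_of_tendsto_of_tendsto_of_le_of_le' tendsto_const_nhds h2 ?_ ?_
    · filter_upwards [eventually_gt_atTop 0] with s hs
      exact sub_nonneg.2 (Real.le_sqrt_of_sq_le (by linarith))
    · filter_upwards [eventually_gt_atTop 0] with s hs
      rw [sub_le_iff_le_add]
      refine Real.sqrt_le_iff.2 ⟨by positivity, ?_⟩
      have : (2 / s + s)^2 = s^2 + 4 + (2 / s)^2 := by
        field_simp
        ring
      rw [this]
      linarith [sq_nonneg (2 / s)]
  have h := tendsto_t_div_atTop.mul ((he.div_const 2).const_add 1)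
  norm_num at h
  refine h.congr' ?_
  filter_upwards [eventually_gt_atTop 0] with s hs
  exact (q_eq hs).symm

lemma tendsto_B_mul_sq_atTop : Tendsto (fun s => B s * (t s)^2) atTop (𝓝 1) := by
  -- `B t²` is a rational function of `(t⁻¹, t / s, q)`, which tends to `(0, 1, 1)`.
  let F : ℝ × ℝ × ℝ → ℝ := fun x =>
    (x.2.1⁻¹ * x.2.2 * ((x.1 + x.2.1⁻¹) * x.1 * x.2.2 - x.1^2 + x.2.1⁻¹)^2
      + ((1 - x.2.2) * x.1 - 1)^2 * (x.2.1⁻¹ * x.2.2 - 1)^2) / (1 - x.1)^2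
  have hF : ContinuousAt F (0, 1, 1) := by
    have hi : ContinuousAt (fun x : ℝ × ℝ × ℝ => x.2.1⁻¹) (0, 1, 1) :=
      ContinuousAt.inv₀ (by fun_prop) (by norm_num)
    exact ContinuousAt.div (by fun_prop) (by fun_prop) (by norm_num)
  have h := hF.tendsto.comp ((tendsto_inv_atTop_zero.comp tendsto_t_atTop).prodMk_nhds
    (tendsto_t_div_atTop.prodMk_nhds tendsto_q_atTop))
  have hF0 : F (0, 1, 1) = 1 := by norm_num [F]
  rw [hF0] at h
  refine h.congr' ?_
  filter_upwards [eventually_gt_atTop 0] with s hs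
  have h1 := add_one_le_t hs
  have h3 : t s ≠ 0 := by linarith
  have h4 : t s - 1 ≠ 0 := by linarith
  have h5 : 1 - (t s)⁻¹ = (t s - 1) / t s := by field_simp
  have h6 : 1 + s - t s = (1 - q s) * (t s)⁻¹ - 1 := by
    unfold q
    field_simp
    ring
  simp only [F, Function.comp, B_eq_q]
  rw [h5, h6]
  field_simp

lemma tendsto_g_atTop : Tendsto g atTop (𝓝 4) := by
  have h := ((tendsto_B_mul_sq_atTop.log one_ne_zero).div_atTop
    (tendsto_log_sqrt_t tendsto_t_atTop)).const_sub 4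
  rw [sub_zero] at h
  refine h.congr' ?_
  filter_upwards [eventually_gt_atTop 0] with s hs
  have h1 : 0 < t s := by linarith [add_one_le_t hs]
  have h2 := log_sqrt_t_pos hs
  have h3 : log (t s) = 2 * log √(t s) := by
    rw [Real.log_sqrt h1.le]
    ring
  rw [Real.log_mul (B_pos hs).ne' (by positivity), Real.log_pow, h3, g]
  field_simp
  push_cast
  ring

theorem stmt_19 : ∀ r : ℝ, 0 < r → r < 4 → ∃ s : ℝ, 0 < s ∧ g s = r := by
  intro r h0 h4
  have h := isPreconnected_Ioi.intermediate_value_Ioo (l₁ := 𝓝[>] (0 : ℝ)) (l₂ := atTop)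
    inf_le_right (le_principal_iff.2 (Ioi_mem_atTop 0)) continuousOn_g
    tendsto_g_zero tendsto_g_atTop
  obtain ⟨s, hs, hg⟩ := h ⟨h0, h4⟩
  exact ⟨s, hs, hg⟩
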